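/- arXiv:1309.7162 — 2 statements merged into one kernel-verified Lean document; each statement's English description precedes it below -/
import Mathlib

section
/- Let X be a finite T0 topological space and let x ∈ X. An element y ∈ X satisfies y → x if and only if y is a closed point of the subspace ∂̃{x} = Ũ{x} \ {x}, i.e., y ∈ ∂̃{x} and the singleton {y} is closed in the subspace topology on ∂̃{x}. -/
/-- The smallest open subset of `X` containing `Y`. -/
def tildeU {X : Type*} [TopologicalSpace X] (Y : Set X) : Set X :=
  ⋂₀ {U : Set X | IsOpen U ∧ Y ⊆ U}

/-- `x ≤ y` : the closure of `{x}` is contained in the closure of `{y}`. -/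
def leSpec {X : Type*} [TopologicalSpace X] (x y : X) : Prop :=
  closure ({x} : Set X) ⊆ closure ({y} : Set X)

/-- `x < y` : `x ≤ y` and `x ≠ y`. -/
def ltSpec {X : Type*} [TopologicalSpace X] (x y : X) : Prop :=
  leSpec x y ∧ x ≠ y

/-- `y → x` : `x < y` and no `z` satisfies `x < z < y`. -/
def arrowTo {X : Type*} [TopologicalSpace X] (y x : X) : Prop :=
  ltSpec x y ∧ ¬ ∃ z : X, ltSpec x z ∧ ltSpec z y

/-!
The points of `∂̃{x}` are exactly those `y` with `x < y`, and the closed points of a subspace are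
its minimal points for `≤`. A minimal element of `{y | x < y}` is one with no `z` such that
`x < z < y`.
-/

section

variable {X : Type*} [TopologicalSpace X]

theorem leSpec_iff_specializes {x y : X} : leSpec x y ↔ y ⤳ x :=
  specializes_iff_closure_subset.symm

theorem tildeU_eq_nhdsKer (Y : Set X) : tildeU Y = nhdsKer Y :=
  (nhdsKer_def Y).symm

theorem mem_tildeU_singleton {x y : X} : y ∈ tildeU {x} ↔ leSpec x y := by
  rw [tildeU_eq_nhdsKer, mem_nhdsKer_singleton, leSpec_iff_specializes]

theorem mem_tildeU_singleton_diff {x y : X} : y ∈ tildeU {x} \ {x} ↔ ltSpec x y :=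
  and_congr mem_tildeU_singleton ne_comm

theorem arrowTo_iff_forall_eq {x y : X} :
    arrowTo y x ↔ ltSpec x y ∧ ∀ z, ltSpec x z → leSpec z y → z = y := by
  simp only [arrowTo, ltSpec, not_exists, not_and, not_not]

theorem isClosed_singleton_iff_forall_specializes {x : X} :
    IsClosed {x} ↔ ∀ z, x ⤳ z → z = x := by
  simp only [← closure_subset_iff_isClosed, Set.subset_def, ← specializes_iff_mem_closure,
    Set.mem_singleton_iff]

theorem isClosed_setOf_coe_eq_iff {S : Set X} {y : X} (hy : y ∈ S) :
    IsClosed {z : S | (z : X) = y} ↔ ∀ z ∈ S, y ⤳ z → z = y := by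
  have eq_singleton : {z : S | (z : X) = y} = {⟨y, hy⟩} := by
    ext z; simp [Subtype.ext_iff]
  simp only [eq_singleton, isClosed_singleton_iff_forall_specializes, Subtype.forall,
    subtype_specializes_iff, Subtype.mk.injEq]

theorem arrowTo_iff_closed_point_of_boundary_general (x y : X) :
    arrowTo y x ↔
      y ∈ tildeU ({x} : Set X) \ {x} ∧
      IsClosed {z : ↥(tildeU ({x} : Set X) \ {x}) | (z : X) = y} := by
  rw [arrowTo_iff_forall_eq, ← mem_tildeU_singleton_diff]
  refine and_congr_right fun hy ↦ ?_
  simp only [isClosed_setOf_coe_eq_iff hy, mem_tildeU_singleton_diff, leSpec_iff_specializes]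

end

/-- In a finite T0 space `X`, for `x, y ∈ X` one has `y → x` if and only if
`y` is a closed point of the subspace `∂̃{x} = Ũ{x} \ {x}`, i.e. `y ∈ ∂̃{x}` and the
singleton `{y}` is closed in the subspace topology on `∂̃{x}`. -/
theorem arrowTo_iff_closed_point_of_boundary {X : Type*} [TopologicalSpace X] [Finite X]
    [T0Space X] (x y : X) :
    arrowTo y x ↔
      y ∈ tildeU ({x} : Set X) \ {x} ∧
      IsClosed {z : ↥(tildeU ({x} : Set X) \ {x}) | (z : X) = y} :=
  arrowTo_iff_closed_point_of_boundary_general x y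
end

section
/- Let G1, G2, G3, F1, F2, F3 be abelian groups with F1, F2, F3 free, together with homomorphisms ε: G1 → G2, γ: G2 → G3, ε': F1 → F2, γ': F2 → F3, δ: F3 → G1 such that the cyclic six-term sequence G1 →ε G2 →γ G3 →0 F1 →ε' F2 →γ' F3 →δ G1 (the map G3 → F1 being the zero map) is exact at every term. Suppose there exist countable nonempty index sets I, I', J, J', row-finite matrices A ∈ M_{I×I'}(ℤ) and B ∈ M_{J×J'}(ℤ), and isomorphisms α1: coker A → G1, β1: ker A → F1, α3: coker B → G3, β3: ker B → F3. Then there exist a row-finite matrix Y ∈ M_{J×I'}(ℤ) and isomorphisms α2: coker M → G2 and β2: ker M → F2, where M = (A 0; Y B) is the block matrix, such that the tuple (α1, α2, α3, β1, β2, β3) is an isomorphism of cyclic complexes from the exact sequence coker A →I coker M →P coker B →0 ker A →I' ker M →P' ker B →[Y] coker A to the given sequence (i.e., all six squares commute: I∘α2 matches α1∘ε, etc.), where I, I' are induced by the inclusion ℤ^{(I)} → ℤ^{(I⊔J)}, P, P' are induced by the projections ℤ^{(I'⊔J')} → ℤ^{(J')} and ℤ^{(I⊔J)} → ℤ^{(J)}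 respectively, and [Y] sends v ∈ ker B to the class of vY in coker A. -/
/-- An integer matrix `D ∈ M_{S×T}(ℤ)` (a function `S × T → ℤ`) is *row-finite* if each
of its rows has only finitely many nonzero entries. -/
def RowFinite {S T : Type*} (D : S → T → ℤ) : Prop :=
  ∀ s : S, {t : T | D s t ≠ 0}.Finite

/-- The `s`-th row of a row-finite matrix, as a finitely supported vector. -/
noncomputable def rowFinsupp {S T : Type*} {D : S → T → ℤ} (hD : RowFinite D) (s : S) :
    T →₀ ℤ :=
  ⟨(hD s).toFinset, D s, fun _ => (hD s).mem_toFinset⟩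

/-- The homomorphism `ℤ^(S) → ℤ^(T)`, `v ↦ v·D`, given by the right action of a
row-finite matrix `D` on finitely supported vectors: `(v·D)(t) = Σ_s v(s)·D(s,t)`. -/
noncomputable def matHom {S T : Type*} {D : S → T → ℤ} (hD : RowFinite D) :
    (S →₀ ℤ) →ₗ[ℤ] (T →₀ ℤ) :=
  Finsupp.lsum ℤ fun s => LinearMap.toSpanSingleton ℤ (T →₀ ℤ) (rowFinsupp hD s)

/-- The block matrix `(A 0; Y B)`. -/
def blockMat {I I' J J' : Type*} (A : I → I' → ℤ) (B : J → J' → ℤ) (Y : J → I' → ℤ) :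
    I ⊕ J → I' ⊕ J' → ℤ
  | Sum.inl i, Sum.inl i' => A i i'
  | Sum.inl _, Sum.inr _ => 0
  | Sum.inr j, Sum.inl i' => Y j i'
  | Sum.inr j, Sum.inr j' => B j j'

/-- The block matrix of row-finite matrices is row-finite. -/
theorem blockMat_rowFinite {I I' J J' : Type*} {A : I → I' → ℤ} {B : J → J' → ℤ}
    {Y : J → I' → ℤ} (hA : RowFinite A) (hB : RowFinite B) (hY : RowFinite Y) :
    RowFinite (blockMat A B Y) := by
  rintro (i | j)
  · apply Set.Finite.subset ((hA i).image Sum.inl)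
    rintro (i' | j') ht
    · exact ⟨i', ht, rfl⟩
    · exact absurd rfl ht
  · apply Set.Finite.subset (((hY j).image Sum.inl).union ((hB j).image Sum.inr))
    rintro (i' | j') ht
    · exact Or.inl ⟨i', ht, rfl⟩
    · exact Or.inr ⟨j', ht, rfl⟩

/-- Projection `ℤ^(α⊔β) → ℤ^(β)` forgetting the `α`-coordinates. -/
noncomputable def projR {α β : Type*} (w : α ⊕ β →₀ ℤ) : β →₀ ℤ :=
  (Finsupp.sumFinsuppAddEquivProdFinsupp w).2

/-- `RealizesSixTerm ε γ ε' γ' δ hA hB α1 β1 α3 β3 Y hY` says: there are isomorphisms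
`α2 : coker (A 0; Y B) ≃ G2` and `β2 : ker (A 0; Y B) ≃ F2` such that
`(α1, α2, α3, β1, β2, β3)` is an isomorphism of cyclic complexes from the six-term
sequence `coker A →I coker M →P coker B →0 ker A →I' ker M →P' ker B →[Y] coker A`
(maps induced by the inclusions/projections of `ℤ^(I⊔J)` and `ℤ^(I'⊔J')`, and
`[Y] v = [v·Y]`) to the sequence `G1 →ε G2 →γ G3 →0 F1 →ε' F2 →γ' F3 →δ G1`. -/
def RealizesSixTerm {I I' J J' : Type*} {G1 G2 G3 F1 F2 F3 : Type*}
    [AddCommGroup G1] [AddCommGroup G2] [AddCommGroup G3]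
    [AddCommGroup F1] [AddCommGroup F2] [AddCommGroup F3]
    (ε : G1 →+ G2) (γ : G2 →+ G3) (ε' : F1 →+ F2) (γ' : F2 →+ F3) (δ : F3 →+ G1)
    {A : I → I' → ℤ} {B : J → J' → ℤ} (hA : RowFinite A) (hB : RowFinite B)
    (α1 : ((I' →₀ ℤ) ⧸ LinearMap.range (matHom hA)) ≃+ G1)
    (β1 : ↥(LinearMap.ker (matHom hA)) ≃+ F1)
    (α3 : ((J' →₀ ℤ) ⧸ LinearMap.range (matHom hB)) ≃+ G3)
    (β3 : ↥(LinearMap.ker (matHom hB)) ≃+ F3)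
    (Y : J → I' → ℤ) (hY : RowFinite Y) : Prop :=
  ∃ (α2 : ((I' ⊕ J' →₀ ℤ) ⧸
      LinearMap.range (matHom (blockMat_rowFinite hA hB hY))) ≃+ G2)
    (β2 : ↥(LinearMap.ker (matHom (blockMat_rowFinite hA hB hY))) ≃+ F2),
    -- the matrix-side maps are well defined:
    (∀ v : ↥(LinearMap.ker (matHom hA)),
      matHom (blockMat_rowFinite hA hB hY) (Finsupp.mapDomain Sum.inl (v : I →₀ ℤ)) = 0) ∧
    (∀ w : ↥(LinearMap.ker (matHom (blockMat_rowFinite hA hB hY))),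
      matHom hB (projR (w : I ⊕ J →₀ ℤ)) = 0) ∧
    (∀ v : I →₀ ℤ, ∃ w : I ⊕ J →₀ ℤ,
      matHom (blockMat_rowFinite hA hB hY) w = Finsupp.mapDomain Sum.inl (matHom hA v)) ∧
    (∀ w : I ⊕ J →₀ ℤ, ∃ v : J →₀ ℤ,
      matHom hB v = projR (matHom (blockMat_rowFinite hA hB hY) w)) ∧
    -- the square for `I : coker A → coker M` against `ε : G1 → G2`
    (∀ u : I' →₀ ℤ,
      α2 (Submodule.Quotient.mk (Finsupp.mapDomain Sum.inl u)) =
        ε (α1 (Submodule.Quotient.mk u))) ∧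
    -- the square for `P : coker M → coker B` against `γ : G2 → G3`
    (∀ w' : I' ⊕ J' →₀ ℤ,
      α3 (Submodule.Quotient.mk (projR w')) = γ (α2 (Submodule.Quotient.mk w'))) ∧
    -- the square for `I' : ker A → ker M` against `ε' : F1 → F2`
    (∀ (v : ↥(LinearMap.ker (matHom hA)))
        (w : ↥(LinearMap.ker (matHom (blockMat_rowFinite hA hB hY)))),
      (w : I ⊕ J →₀ ℤ) = Finsupp.mapDomain Sum.inl (v : I →₀ ℤ) →
      β2 w = ε' (β1 v)) ∧
    -- the square for `P' : ker M → ker B` against `γ' : F2 → F3`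
    (∀ (w : ↥(LinearMap.ker (matHom (blockMat_rowFinite hA hB hY))))
        (v : ↥(LinearMap.ker (matHom hB))),
      (v : J →₀ ℤ) = projR (w : I ⊕ J →₀ ℤ) →
      β3 v = γ' (β2 w)) ∧
    -- the square for `[Y] : ker B → coker A` against `δ : F3 → G1`
    (∀ v : ↥(LinearMap.ker (matHom hB)),
      α1 (Submodule.Quotient.mk (matHom hY (v : J →₀ ℤ))) = δ (β3 v))

/-!
Present the outer terms by exact sequences `0 → F1 → P → P' → G1 → 0` and
`0 → F3 → Q → Q' → G3 → 0`, with maps `k1, a, q1` and `k3, b, q3`, where `a` and `b` are the actions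
of `A` and `B`. As in the horseshoe lemma, a sequence `0 → F2 → P × Q → P' × Q' → G2 → 0` whose
middle map has the block matrix `(a 0; y b)` is assembled from

* a lift `s : Q' → G2` of `q3` along `γ`,
* a block `y : Q → P'` such that `z = q1 ∘ y` extends `δ` along `k3` and solves `ε ∘ z = -s ∘ b`,
* an extension `t : F2 → P` of `k1` along `ε'` solving `a ∘ t = -y ∘ k3 ∘ γ'`.

Both `z` and `t` come from one extension-lifting principle, which requires the images of `b` and
of `γ'` to be projective. Over a principal ideal domain they are even free, since every submodule
of a free module is.
-/

open Function (Exact Injective Surjective)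
open LinearMap Submodule

section FreeSubmodule

variable {R ι : Type*} [Ring R] [LinearOrder ι]

theorem linearIndependent_of_mem_supported_Iic [NoZeroDivisors R] {κ : Type*} {lead : κ → ι}
    (hlead : Injective lead) {v : κ → ι →₀ R}
    (hv : ∀ k, v k ∈ Finsupp.supported R R (Set.Iic (lead k))) (hv0 : ∀ k, v k (lead k) ≠ 0) :
    LinearIndependent R v := by
  rw [linearIndependent_iff]
  intro l hl
  by_contra hne
  obtain ⟨k, hk, hmax⟩ := l.support.exists_max_image lead (Finsupp.support_nonempty_iff.2 hne)
  have hvanish : ∀ j ∈ l.support, j ≠ k → (l j • v j) (lead k) = 0 := by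
    intro j hj hjk
    have hlt : lead j < lead k := (hmax j hj).lt_of_ne (hlead.ne hjk)
    rw [Finsupp.smul_apply, (Finsupp.mem_supported' R _).1 (hv j) _ (Set.notMem_Iic.2 hlt),
      smul_zero]
  have hcoord : (l k • v k) (lead k) = 0 := by
    rw [← Finset.sum_eq_single_of_mem k hk hvanish, ← Finsupp.finsetSum_apply]
    exact DFunLike.congr_fun hl (lead k)
  exact mul_ne_zero (Finsupp.mem_support_iff.1 hk) (hv0 k) hcoord

/-- `IsPivot N i x` says that `x` is a vector of `N` with coordinates only up to `i`, whose `i`-th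
coordinate generates the left ideal of `i`-th coordinates of all such vectors. A submodule of a
free module has the pivots with nonzero leading coordinate as a basis. -/
structure IsPivot (N : Submodule R (ι →₀ R)) (i : ι) (x : ι →₀ R) : Prop where
  mem : x ∈ N
  mem_supported : x ∈ Finsupp.supported R R (Set.Iic i)
  exists_eq_mul : ∀ y ∈ N, y ∈ Finsupp.supported R R (Set.Iic i) → ∃ c, y i = c * x i

theorem exists_isPivot [IsPrincipalIdealRing R] (N : Submodule R (ι →₀ R)) (i : ι) :
    ∃ x, IsPivot N i x := by
  let leading : Ideal R := (N ⊓ Finsupp.supported R R (Set.Iic i)).map (Finsupp.lapply i)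
  obtain ⟨x, ⟨hxN, hxi⟩, hx⟩ := IsPrincipal.generator_mem leading
  refine ⟨x, hxN, hxi, fun y hyN hyi => ?_⟩
  obtain ⟨c, hc⟩ := (IsPrincipal.mem_iff_eq_smul_generator leading).1
    (mem_map_of_mem (f := Finsupp.lapply i) ⟨hyN, hyi⟩)
  exact ⟨c, by rw [← hx] at hc; exact hc⟩

theorem exists_sub_smul_pivot_support_max_lt {N : Submodule R (ι →₀ R)} {x : ι → ι →₀ R}
    (hx : ∀ i, IsPivot N i (x i)) {y : ι →₀ R} (hy : y ∈ N) (hy0 : y ≠ 0) :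
    ∃ (i : ι) (c : R), x i i ≠ 0 ∧ (y - c • x i).support.max < y.support.max := by
  have hne : y.support.Nonempty := Finsupp.support_nonempty_iff.2 hy0
  set i := y.support.max' hne
  have hyi : y ∈ Finsupp.supported R R (Set.Iic i) := fun j hj => y.support.le_max' j hj
  obtain ⟨c, hc⟩ := (hx i).exists_eq_mul y hy hyi
  have hyi0 : y i ≠ 0 := Finsupp.mem_support_iff.1 (y.support.max'_mem hne)
  refine ⟨i, c, right_ne_zero_of_mul (hc ▸ hyi0), ?_⟩
  rw [← Finset.coe_max' hne, Finset.max, Finset.sup_lt_iff (WithBot.bot_lt_coe i)]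
  intro j hj
  have hji : j ≤ i := sub_mem hyi (smul_mem _ c (hx i).mem_supported) hj
  have hne_lead : j ≠ i := by
    rintro rfl
    exact Finsupp.mem_support_iff.1 hj (sub_eq_zero.2 hc)
  exact WithBot.coe_lt_coe.2 (hji.lt_of_ne hne_lead)

theorem le_span_pivots [WellFoundedLT ι] {N : Submodule R (ι →₀ R)} {x : ι → ι →₀ R}
    (hx : ∀ i, IsPivot N i (x i)) : N ≤ span R (Set.range fun i : {i // x i i ≠ 0} => x i) := by
  intro y hy
  induction hmax : y.support.max using WellFoundedLT.induction generalizing y with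
  | ind m ih =>
    subst hmax
    rcases eq_or_ne y 0 with rfl | hy0
    · exact zero_mem _
    · obtain ⟨i, c, hi, hlt⟩ := exists_sub_smul_pivot_support_max_lt hx hy hy0
      have hrest := ih _ hlt (sub_mem hy (N.smul_mem c (hx i).mem)) rfl
      have hpivot : x i ∈ span R (Set.range fun i : {i // x i i ≠ 0} => x i) :=
        subset_span ⟨⟨i, hi⟩, rfl⟩
      simpa only [sub_add_cancel] using add_mem hrest (smul_mem _ c hpivot)

end FreeSubmodule

theorem free_submodule_finsupp {R ι : Type*} [Ring R] [IsDomain R] [IsPrincipalIdealRing R]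
    (N : Submodule R (ι →₀ R)) : Module.Free R N := by
  obtain ⟨_, _⟩ := exists_wellFoundedLT ι
  choose x hx using exists_isPivot N
  let v : {i // x i i ≠ 0} → N := fun i => ⟨x i, (hx i).mem⟩
  have hind : LinearIndependent R v := .of_comp N.subtype <|
    linearIndependent_of_mem_supported_Iic Subtype.val_injective
      (fun i => (hx i).mem_supported) fun i => i.2
  have hspan : ⊤ ≤ span R (Set.range v) := by
    rw [← map_le_map_iff_of_injective N.injective_subtype, map_subtype_top, Submodule.map_span,
      ← Set.range_comp]
    exact le_span_pivots hx
  exact .of_basis (.mk hind hspan)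

theorem free_of_injective {R M N : Type*} [Ring R] [IsDomain R] [IsPrincipalIdealRing R]
    [AddCommGroup M] [Module R M] [Module.Free R M] [AddCommGroup N] [Module R N]
    {f : N →ₗ[R] M} (hf : Injective f) : Module.Free R N := by
  let g : N →ₗ[R] Module.Free.ChooseBasisIndex R M →₀ R :=
    (Module.Free.chooseBasis R M).repr.toLinearMap ∘ₗ f
  have hg : Injective g := (LinearEquiv.injective _).comp hf
  have := free_submodule_finsupp (range g)
  exact .of_equiv (LinearEquiv.ofInjective g hg).symm

section ExtensionLifting

variable {R K E N X Z : Type*} [Ring R] [AddCommGroup K] [AddCommGroup E] [AddCommGroup N]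
  [AddCommGroup X] [AddCommGroup Z] [Module R K] [Module R E] [Module R N] [Module R X] [Module R Z]

theorem exists_comp_eq_of_range_le [Module.Projective R N] {f : X →ₗ[R] Z} {g : N →ₗ[R] Z}
    (hgf : range g ≤ range f) : ∃ t : N →ₗ[R] X, f ∘ₗ t = g := by
  obtain ⟨t, ht⟩ := Module.projective_lifting_property f.rangeRestrict
    (g.codRestrict (range f) fun x => hgf ⟨x, rfl⟩) f.surjective_rangeRestrict
  exact ⟨t, LinearMap.ext fun x => congrArg Subtype.val (LinearMap.congr_fun ht x)⟩

theorem exists_comp_eq_and_comp_eq_of_exact {i : K →ₗ[R] E} {p : E →ₗ[R] N} (hip : Exact i p)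
    (hi : Injective i) [Module.Projective R (range p)] {k : K →ₗ[R] X} {f : X →ₗ[R] Z}
    {g : E →ₗ[R] Z} (hgf : range g ≤ range f) (hk : f ∘ₗ k = g ∘ₗ i) :
    ∃ t : E →ₗ[R] X, t ∘ₗ i = k ∧ f ∘ₗ t = g := by
  have hexact : Exact i p.rangeRestrict := fun x => by
    rw [← hip x, ← Subtype.val_inj]
    rfl
  obtain ⟨e, rfl, -⟩ := hexact.splitSurjectiveEquiv hi
    ⟨_, (p.rangeRestrict.exists_rightInverse_of_surjective p.range_rangeRestrict).choose_spec⟩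
  obtain ⟨τ, hτ⟩ : ∃ τ : range p →ₗ[R] X, f ∘ₗ τ = g ∘ₗ e.symm ∘ₗ inr R K (range p) :=
    exists_comp_eq_of_range_le ((range_comp_le_range _ g).trans hgf)
  have hcoprod : f ∘ₗ k.coprod τ = g ∘ₗ e.symm := by
    rw [comp_coprod, hk, hτ, ← comp_assoc, ← comp_assoc, ← comp_coprod, coprod_inl_inr, comp_id]
  refine ⟨k.coprod τ ∘ₗ e, ?_, ?_⟩
  · ext; simp
  · rw [← comp_assoc, hcoprod]
    ext; simp

end ExtensionLifting

/-- Exactness of `0 → F → P → P' → G → 0`: the map `k` identifies `F` with the kernel of `a`, and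
`q` identifies `G` with its cokernel. -/
structure IsKerCokerSequence {R F P P' G : Type*} [Ring R] [AddCommGroup F] [AddCommGroup P]
    [AddCommGroup P'] [AddCommGroup G] [Module R F] [Module R P] [Module R P'] [Module R G]
    (k : F →ₗ[R] P) (a : P →ₗ[R] P') (q : P' →ₗ[R] G) : Prop where
  injective : Injective k
  exact_left : Exact k a
  exact_right : Exact a q
  surjective : Surjective q

namespace IsKerCokerSequence

variable {R F P P' G : Type*} [Ring R] [AddCommGroup F] [AddCommGroup P]
  [AddCommGroup P'] [AddCommGroup G] [Module R F] [Module R P] [Module R P'] [Module R G]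
  {k : F →ₗ[R] P} {a : P →ₗ[R] P'} {q : P' →ₗ[R] G}

theorem of_equiv (β : ker a ≃ₗ[R] F) (α : (P' ⧸ range a) ≃ₗ[R] G) :
    IsKerCokerSequence ((ker a).subtype ∘ₗ β.symm.toLinearMap) a
      (α.toLinearMap ∘ₗ (range a).mkQ) where
  injective := (ker a).injective_subtype.comp β.symm.injective
  exact_left := β.symm.surjective.comp_exact_iff_exact.2 a.exact_subtype_ker_map
  exact_right := α.injective.comp_exact_iff_exact.2 a.exact_map_mkQ_range
  surjective := α.surjective.comp (range a).mkQ_surjective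

theorem conj {S T : Type*} [AddCommGroup S] [AddCommGroup T] [Module R S] [Module R T]
    (h : IsKerCokerSequence k a q) (e : S ≃ₗ[R] P) (e' : T ≃ₗ[R] P') {m : S →ₗ[R] T}
    (hm : e' ∘ₗ m = a ∘ₗ e) : IsKerCokerSequence (e.symm ∘ₗ k) m (q ∘ₗ e') where
  injective := e.symm.injective.comp h.injective
  exact_left := Exact.of_ladder_linearEquiv_of_exact (e₁ := .refl R F) (e₂ := e.symm)
    (e₃ := e'.symm) rfl
    (by rw [LinearEquiv.eq_toLinearMap_symm_comp, ← comp_assoc, hm]; ext; simp) h.exact_left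
  exact_right := Exact.of_ladder_linearEquiv_of_exact (e₁ := e.symm) (e₂ := e'.symm)
    (e₃ := .refl R G)
    (by rw [LinearEquiv.eq_toLinearMap_symm_comp, ← comp_assoc, hm]; ext; simp)
    (by ext; simp) h.exact_right
  surjective := h.surjective.comp e'.surjective

/-- The identification of the kernel of the middle map with the first term. -/
noncomputable def kerEquiv (h : IsKerCokerSequence k a q) : ker a ≃ₗ[R] F :=
  (LinearEquiv.ofEq _ _ h.exact_left.linearMap_ker_eq).trans (.symm (.ofInjective k h.injective))

theorem apply_kerEquiv (h : IsKerCokerSequence k a q) (x : ker a) : k (h.kerEquiv x) = x :=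
  congrArg Subtype.val ((LinearEquiv.ofInjective k h.injective).apply_symm_apply _)

end IsKerCokerSequence

section BlockMap

variable {R P P' Q Q' : Type*} [Ring R] [AddCommGroup P] [AddCommGroup P'] [AddCommGroup Q]
  [AddCommGroup Q'] [Module R P] [Module R P'] [Module R Q] [Module R Q']

/-- The linear map with block matrix `(a 0; y b)` acting on row vectors,
`(u, v) ↦ (u·a + v·y, v·b)`. -/
def blockMap (a : P →ₗ[R] P') (b : Q →ₗ[R] Q') (y : Q →ₗ[R] P') : P × Q →ₗ[R] P' × Q' :=
  (a.coprod y).prod (b ∘ₗ snd R P Q)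

theorem blockMap_apply (a : P →ₗ[R] P') (b : Q →ₗ[R] Q') (y : Q →ₗ[R] P') (w : P × Q) :
    blockMap a b y w = (a w.1 + y w.2, b w.2) := rfl

variable {F1 F2 F3 G1 G2 G3 : Type*} [AddCommGroup F1] [AddCommGroup F2] [AddCommGroup F3]
  [AddCommGroup G1] [AddCommGroup G2] [AddCommGroup G3] [Module R F1] [Module R F2] [Module R F3]
  [Module R G1] [Module R G2] [Module R G3]
  {ε : G1 →ₗ[R] G2} {γ : G2 →ₗ[R] G3} {ε' : F1 →ₗ[R] F2} {γ' : F2 →ₗ[R] F3} {δ : F3 →ₗ[R] G1}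
  {k1 : F1 →ₗ[R] P} {a : P →ₗ[R] P'} {q1 : P' →ₗ[R] G1}
  {k3 : F3 →ₗ[R] Q} {b : Q →ₗ[R] Q'} {q3 : Q' →ₗ[R] G3}
  {y : Q →ₗ[R] P'} {s : Q' →ₗ[R] G2} {t : F2 →ₗ[R] P}

theorem exact_blockMap_coprod (haq : Exact a q1) (hkb : b ∘ₗ k3 = 0) (hbq : Exact b q3)
    (hδε : Exact δ ε) (hεγ : Exact ε γ) (hs : γ ∘ₗ s = q3) (hy : ε ∘ₗ q1 ∘ₗ y = -(s ∘ₗ b))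
    (hyδ : q1 ∘ₗ y ∘ₗ k3 = δ) :
    Exact (blockMap a b y) ((ε ∘ₗ q1).coprod s) := by
  subst hs hyδ
  have hy' : ∀ x, ε (q1 (y x)) = -s (b x) := LinearMap.congr_fun hy
  rintro ⟨u, v⟩
  constructor
  · intro huv
    have huv' : ε (q1 u) + s v = 0 := huv
    have hv : γ (s v) = 0 := by
      rw [eq_neg_of_add_eq_zero_right huv', map_neg, hεγ.apply_apply_eq_zero, neg_zero]
    obtain ⟨x, rfl⟩ := (hbq v).1 hv
    have hε : ε (q1 (u - y x)) = 0 := by rw [map_sub, map_sub, hy', sub_neg_eq_add, huv']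
    obtain ⟨n, hn⟩ := (hδε _).1 hε
    have hq : q1 (u - y x - y (k3 n)) = 0 := by rw [map_sub, sub_eq_zero]; exact hn.symm
    obtain ⟨z, hz⟩ := (haq _).1 hq
    refine ⟨(z, x + k3 n), Prod.ext ?_ ?_⟩
    · change a z + y (x + k3 n) = u
      rw [hz, map_add]
      abel
    · change b (x + k3 n) = b x
      rw [map_add, show b (k3 n) = 0 from LinearMap.congr_fun hkb n, add_zero]
  · rintro ⟨⟨z, x⟩, hzx⟩
    rw [← hzx, blockMap_apply, coprod_apply, comp_apply, map_add, haq.apply_apply_eq_zero,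
      zero_add, hy', neg_add_cancel]

theorem coprod_surjective_of_exact (hq1 : Surjective q1) (hq3 : Surjective q3) (hεγ : Exact ε γ)
    (hs : γ ∘ₗ s = q3) : Surjective ((ε ∘ₗ q1).coprod s) := by
  subst hs
  intro g
  obtain ⟨v, hv⟩ := hq3 (γ g)
  obtain ⟨x, hx⟩ := (hεγ (g - s v)).1 (by rw [map_sub, ← hv, comp_apply, sub_self])
  obtain ⟨u, rfl⟩ := hq1 x
  exact ⟨(u, v), by rw [coprod_apply, comp_apply, hx, sub_add_cancel]⟩

theorem exact_prod_blockMap (hka : Exact k1 a) (hqa : q1 ∘ₗ a = 0) (hkb : Exact k3 b)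
    (hεγ' : Exact ε' γ') (hγδ : Exact γ' δ) (ht : t ∘ₗ ε' = k1)
    (hat : a ∘ₗ t = -(y ∘ₗ k3 ∘ₗ γ')) (hyδ : q1 ∘ₗ y ∘ₗ k3 = δ) :
    Exact (t.prod (k3 ∘ₗ γ')) (blockMap a b y) := by
  subst ht hyδ
  have hat' : ∀ x, a (t x) = -y (k3 (γ' x)) := LinearMap.congr_fun hat
  rintro ⟨u, v⟩
  constructor
  · intro huv
    obtain ⟨hu, hv⟩ : a u + y v = 0 ∧ b v = 0 := Prod.ext_iff.1 huv
    obtain ⟨n, rfl⟩ := (hkb v).1 hv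
    have hδ : q1 (y (k3 n)) = 0 := by
      rw [eq_neg_of_add_eq_zero_right hu, map_neg, neg_eq_zero]
      exact LinearMap.congr_fun hqa u
    obtain ⟨w, rfl⟩ := (hγδ n).1 hδ
    have ha : a (u - t w) = 0 := by rw [map_sub, hat', sub_neg_eq_add, hu]
    obtain ⟨z, hz⟩ := (hka _).1 ha
    refine ⟨w + ε' z, Prod.ext ?_ ?_⟩
    · change t (w + ε' z) = u
      rw [map_add, ← comp_apply t ε', hz, add_sub_cancel]
    · change k3 (γ' (w + ε' z)) = k3 (γ' w)
      rw [map_add, hεγ'.apply_apply_eq_zero, add_zero]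
  · rintro ⟨w, hw⟩
    rw [← hw, blockMap_apply]
    exact Prod.ext (by simp [hat']) (hkb.apply_apply_eq_zero _)

theorem prod_injective_of_exact (hk1 : Injective k1) (hk3 : Injective k3) (hεγ' : Exact ε' γ')
    (ht : t ∘ₗ ε' = k1) : Injective (t.prod (k3 ∘ₗ γ')) := by
  subst ht
  rw [injective_iff_map_eq_zero]
  intro x hx
  obtain ⟨htx, hkx⟩ : t x = 0 ∧ k3 (γ' x) = 0 := Prod.ext_iff.1 hx
  obtain ⟨z, rfl⟩ := (hεγ' x).1 ((map_eq_zero_iff k3 hk3).1 hkx)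
  rw [(map_eq_zero_iff (t ∘ₗ ε') hk1).1 htx, map_zero]

theorem exists_offDiagonal [Module.Projective R Q] [Module.Projective R (range b)]
    (hq1 : Surjective q1) (h3 : IsKerCokerSequence k3 b q3) (hδε : Exact δ ε) (hεγ : Exact ε γ)
    (hs : γ ∘ₗ s = q3) :
    ∃ y : Q →ₗ[R] P', q1 ∘ₗ y ∘ₗ k3 = δ ∧ ε ∘ₗ q1 ∘ₗ y = -(s ∘ₗ b) := by
  have hrange : range (-(s ∘ₗ b)) ≤ range ε := by
    rintro _ ⟨x, rfl⟩
    refine (hεγ _).1 ?_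
    rw [LinearMap.neg_apply, map_neg, neg_eq_zero]
    exact (LinearMap.congr_fun hs (b x)).trans (h3.exact_right.apply_apply_eq_zero x)
  have hcomm : ε ∘ₗ δ = (-(s ∘ₗ b)) ∘ₗ k3 := by
    rw [hδε.linearMap_comp_eq_zero, neg_comp, comp_assoc, h3.exact_left.linearMap_comp_eq_zero,
      comp_zero, neg_zero]
  obtain ⟨z, hzδ, hεz⟩ :=
    exists_comp_eq_and_comp_eq_of_exact h3.exact_left h3.injective hrange hcomm
  obtain ⟨y, rfl⟩ := Module.projective_lifting_property q1 z hq1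
  exact ⟨y, hzδ, hεz⟩

theorem exists_extension_to_middle_kernel [Module.Projective R (range γ')]
    (h1 : IsKerCokerSequence k1 a q1) (hε' : Injective ε') (hεγ' : Exact ε' γ') (hγδ : Exact γ' δ)
    (hyδ : q1 ∘ₗ y ∘ₗ k3 = δ) :
    ∃ t : F2 →ₗ[R] P, t ∘ₗ ε' = k1 ∧ a ∘ₗ t = -(y ∘ₗ k3 ∘ₗ γ') := by
  have hrange : range (-(y ∘ₗ k3 ∘ₗ γ')) ≤ range a := by
    rintro _ ⟨x, rfl⟩
    refine (h1.exact_right _).1 ?_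
    rw [LinearMap.neg_apply, map_neg, neg_eq_zero]
    exact (LinearMap.congr_fun hyδ (γ' x)).trans (hγδ.apply_apply_eq_zero x)
  have hcomm : a ∘ₗ k1 = (-(y ∘ₗ k3 ∘ₗ γ')) ∘ₗ ε' := by
    rw [h1.exact_left.linearMap_comp_eq_zero, neg_comp, comp_assoc, comp_assoc,
      hεγ'.linearMap_comp_eq_zero, comp_zero, comp_zero, neg_zero]
  exact exists_comp_eq_and_comp_eq_of_exact hεγ' hε' hrange hcomm

theorem exists_isKerCokerSequence_blockMap [Module.Projective R Q] [Module.Projective R Q']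
    [Module.Projective R (range b)] [Module.Projective R (range γ')]
    (h1 : IsKerCokerSequence k1 a q1) (h3 : IsKerCokerSequence k3 b q3)
    (hεγ : Exact ε γ) (hγ : Surjective γ) (hε' : Injective ε') (hεγ' : Exact ε' γ')
    (hγδ : Exact γ' δ) (hδε : Exact δ ε) :
    ∃ (y : Q →ₗ[R] P') (k2 : F2 →ₗ[R] P × Q) (q2 : P' × Q' →ₗ[R] G2),
      IsKerCokerSequence k2 (blockMap a b y) q2 ∧
      q2 ∘ₗ inl R P' Q' = ε ∘ₗ q1 ∧ γ ∘ₗ q2 = q3 ∘ₗ snd R P' Q' ∧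
      k2 ∘ₗ ε' = inl R P Q ∘ₗ k1 ∧ snd R P Q ∘ₗ k2 = k3 ∘ₗ γ' ∧ q1 ∘ₗ y ∘ₗ k3 = δ := by
  obtain ⟨s, hs⟩ := Module.projective_lifting_property γ q3 hγ
  obtain ⟨y, hyδ, hy⟩ := exists_offDiagonal h1.surjective h3 hδε hεγ hs
  obtain ⟨t, ht, hat⟩ := exists_extension_to_middle_kernel h1 hε' hεγ' hγδ hyδ
  have h2 : IsKerCokerSequence (t.prod (k3 ∘ₗ γ')) (blockMap a b y) ((ε ∘ₗ q1).coprod s) :=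
    { injective := prod_injective_of_exact h1.injective h3.injective hεγ' ht
      exact_left := exact_prod_blockMap h1.exact_left h1.exact_right.linearMap_comp_eq_zero
        h3.exact_left hεγ' hγδ ht hat hyδ
      exact_right := exact_blockMap_coprod h1.exact_right h3.exact_left.linearMap_comp_eq_zero
        h3.exact_right hδε hεγ hs hy hyδ
      surjective := coprod_surjective_of_exact h1.surjective h3.surjective hεγ hs }
  refine ⟨y, _, _, h2, coprod_inl _ _, ?_, ?_, snd_prod _ _, hyδ⟩
  · rw [comp_coprod, ← comp_assoc, hεγ.linearMap_comp_eq_zero, zero_comp, hs]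
    ext <;> simp
  · rw [prod_comp, ht, comp_assoc, hεγ'.linearMap_comp_eq_zero, comp_zero]
    rfl

end BlockMap

section RowFiniteMatrix

variable {S T : Type*}

theorem rowFinite_of_linearMap (y : (S →₀ ℤ) →ₗ[ℤ] (T →₀ ℤ)) :
    RowFinite fun s t => y (Finsupp.single s 1) t :=
  fun s => (y (Finsupp.single s 1)).hasFiniteSupport

theorem matHom_single {D : S → T → ℤ} (hD : RowFinite D) (s : S) :
    matHom hD (Finsupp.single s 1) = rowFinsupp hD s := by
  simp [matHom]

theorem matHom_rowFinite_of_linearMap (y : (S →₀ ℤ) →ₗ[ℤ] (T →₀ ℤ)) :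
    matHom (rowFinite_of_linearMap y) = y := by
  ext s t
  simp only [coe_comp, Function.comp_apply, Finsupp.lsingle_apply, matHom_single]
  rfl

theorem sumFinsuppLEquivProdFinsupp_mapDomain_inl {R : Type*} [Semiring R] (u : S →₀ R) :
    Finsupp.sumFinsuppLEquivProdFinsupp R (u.mapDomain (Sum.inl : S → S ⊕ T)) = (u, 0) := by
  ext t
  · exact Finsupp.mapDomain_apply Sum.inl_injective u t
  · exact Finsupp.mapDomain_of_notMem_range u _ (by simp)

end RowFiniteMatrix

section BlockMatrix

variable {I I' J J' : Type*} {A : I → I' → ℤ} {B : J → J' → ℤ} {Y : J → I' → ℤ}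
  (hA : RowFinite A) (hB : RowFinite B) (hY : RowFinite Y)

theorem matHom_blockMat :
    (Finsupp.sumFinsuppLEquivProdFinsupp ℤ).toLinearMap ∘ₗ matHom (blockMat_rowFinite hA hB hY) =
      blockMap (matHom hA) (matHom hB) (matHom hY) ∘ₗ
        (Finsupp.sumFinsuppLEquivProdFinsupp ℤ).toLinearMap := by
  ext (i | j) : 2
  · have hrow : Finsupp.sumFinsuppLEquivProdFinsupp ℤ
        (rowFinsupp (blockMat_rowFinite hA hB hY) (Sum.inl i)) = (rowFinsupp hA i, 0) :=
      Prod.ext (Finsupp.ext fun _ => rfl) (Finsupp.ext fun _ => rfl)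
    simpa [matHom_single, blockMap_apply] using hrow
  · have hrow : Finsupp.sumFinsuppLEquivProdFinsupp ℤ
        (rowFinsupp (blockMat_rowFinite hA hB hY) (Sum.inr j)) =
          (rowFinsupp hY j, rowFinsupp hB j) :=
      Prod.ext (Finsupp.ext fun _ => rfl) (Finsupp.ext fun _ => rfl)
    simpa [matHom_single, blockMap_apply] using hrow

theorem matHom_blockMat_mapDomain_inl (v : I →₀ ℤ) :
    matHom (blockMat_rowFinite hA hB hY) (v.mapDomain Sum.inl) =
      (matHom hA v).mapDomain Sum.inl := by
  apply (Finsupp.sumFinsuppLEquivProdFinsupp ℤ).injective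
  refine (LinearMap.congr_fun (matHom_blockMat hA hB hY) _).trans ?_
  rw [comp_apply, LinearEquiv.coe_coe, sumFinsuppLEquivProdFinsupp_mapDomain_inl,
    sumFinsuppLEquivProdFinsupp_mapDomain_inl, blockMap_apply, map_zero, map_zero, add_zero]

theorem projR_matHom_blockMat (w : I ⊕ J →₀ ℤ) :
    projR (matHom (blockMat_rowFinite hA hB hY) w) = matHom hB (projR w) :=
  congrArg Prod.snd (LinearMap.congr_fun (matHom_blockMat hA hB hY) w)

variable {G1 G2 G3 F1 F2 F3 : Type*} [AddCommGroup G1] [AddCommGroup G2] [AddCommGroup G3]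
  [AddCommGroup F1] [AddCommGroup F2] [AddCommGroup F3]
  {ε : G1 →+ G2} {γ : G2 →+ G3} {ε' : F1 →+ F2} {γ' : F2 →+ F3} {δ : F3 →+ G1}
  {hA hB hY}
  {α1 : ((I' →₀ ℤ) ⧸ range (matHom hA)) ≃+ G1} {β1 : ker (matHom hA) ≃+ F1}
  {α3 : ((J' →₀ ℤ) ⧸ range (matHom hB)) ≃+ G3} {β3 : ker (matHom hB) ≃+ F3}

theorem realizesSixTerm_of_isKerCokerSequence {k : F2 →ₗ[ℤ] (I ⊕ J →₀ ℤ)}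
    {q : (I' ⊕ J' →₀ ℤ) →ₗ[ℤ] G2}
    (h : IsKerCokerSequence k (matHom (blockMat_rowFinite hA hB hY)) q)
    (hqε : ∀ u : I' →₀ ℤ, q (u.mapDomain Sum.inl) = ε (α1 (Submodule.Quotient.mk u)))
    (hqγ : ∀ w, γ (q w) = α3 (Submodule.Quotient.mk (projR w)))
    (hkε' : ∀ v, k (ε' (β1 v)) = (v : I →₀ ℤ).mapDomain Sum.inl)
    (hkγ' : ∀ x, projR (k x) = (β3.symm (γ' x) : J →₀ ℤ))
    (hδ : ∀ v : ker (matHom hB), α1 (Submodule.Quotient.mk (matHom hY v)) = δ (β3 v)) :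
    RealizesSixTerm ε γ ε' γ' δ hA hB α1 β1 α3 β3 Y hY := by
  refine ⟨(h.exact_right.linearEquivOfSurjective h.surjective).toAddEquiv, h.kerEquiv.toAddEquiv,
    fun v => ?_, fun w => ?_, fun v => ⟨_, matHom_blockMat_mapDomain_inl hA hB hY v⟩,
    fun w => ⟨_, (projR_matHom_blockMat hA hB hY w).symm⟩, hqε, fun w => (hqγ w).symm,
    fun v w hw => ?_, fun w v hv => ?_, hδ⟩
  · rw [matHom_blockMat_mapDomain_inl hA hB hY, mem_ker.1 v.2, Finsupp.mapDomain_zero]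
  · rw [← projR_matHom_blockMat hA hB hY, mem_ker.1 w.2, projR, map_zero, Prod.snd_zero]
  · exact h.injective ((h.apply_kerEquiv w).trans (hw.trans (hkε' v).symm))
  · rw [← β3.eq_symm_apply, ← Subtype.val_inj, ← hkγ', hv]
    exact congrArg projR (h.apply_kerEquiv w).symm

theorem realizesSixTerm_of_isKerCokerSequence_blockMap
    {k : F2 →ₗ[ℤ] (I →₀ ℤ) × (J →₀ ℤ)} {q : (I' →₀ ℤ) × (J' →₀ ℤ) →ₗ[ℤ] G2}
    (h : IsKerCokerSequence k (blockMap (matHom hA) (matHom hB) (matHom hY)) q)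
    (hqε : ∀ u, q (u, 0) = ε (α1 (Submodule.Quotient.mk u)))
    (hqγ : ∀ w, γ (q w) = α3 (Submodule.Quotient.mk w.2))
    (hkε' : ∀ x, k (ε' x) = (↑(β1.symm x), 0))
    (hkγ' : ∀ x, (k x).2 = β3.symm (γ' x))
    (hδ : ∀ x, α1 (Submodule.Quotient.mk (matHom hY (β3.symm x))) = δ x) :
    RealizesSixTerm ε γ ε' γ' δ hA hB α1 β1 α3 β3 Y hY := by
  refine realizesSixTerm_of_isKerCokerSequence
    (h.conj _ _ (matHom_blockMat hA hB hY)) (fun u => ?_) (fun w => hqγ _) (fun v => ?_)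
    (fun x => ?_) (fun v => ?_)
  · rw [comp_apply, LinearEquiv.coe_coe, sumFinsuppLEquivProdFinsupp_mapDomain_inl, hqε]
  · rw [comp_apply, LinearEquiv.coe_coe, LinearEquiv.symm_apply_eq,
      sumFinsuppLEquivProdFinsupp_mapDomain_inl, hkε', β1.symm_apply_apply]
  · rw [← hkγ']
    exact congrArg Prod.snd ((Finsupp.sumFinsuppLEquivProdFinsupp ℤ).apply_symm_apply (k x))
  · rw [← hδ, β3.symm_apply_apply]

end BlockMatrix

theorem six_term_realization_general {I I' J J' : Type*} {G1 G2 G3 F1 F2 F3 : Type*}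
    [AddCommGroup G1] [AddCommGroup G2] [AddCommGroup G3]
    [AddCommGroup F1] [AddCommGroup F2] [AddCommGroup F3]
    {ε : G1 →+ G2} {γ : G2 →+ G3} {ε' : F1 →+ F2} {γ' : F2 →+ F3} {δ : F3 →+ G1}
    (hεγ : Exact ε γ) (hγ : Surjective γ) (hε' : Injective ε') (hεγ' : Exact ε' γ')
    (hγδ : Exact γ' δ) (hδε : Exact δ ε)
    {A : I → I' → ℤ} {B : J → J' → ℤ} (hA : RowFinite A) (hB : RowFinite B)
    (α1 : ((I' →₀ ℤ) ⧸ range (matHom hA)) ≃+ G1) (β1 : ker (matHom hA) ≃+ F1)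
    (α3 : ((J' →₀ ℤ) ⧸ range (matHom hB)) ≃+ G3) (β3 : ker (matHom hB) ≃+ F3) :
    ∃ (Y : J → I' → ℤ) (hY : RowFinite Y),
      RealizesSixTerm ε γ ε' γ' δ hA hB α1 β1 α3 β3 Y hY := by
  have h1 := IsKerCokerSequence.of_equiv β1.toIntLinearEquiv α1.toIntLinearEquiv
  have h3 := IsKerCokerSequence.of_equiv β3.toIntLinearEquiv α3.toIntLinearEquiv
  have : Module.Free ℤ (range (matHom hB)) := free_submodule_finsupp _
  have : Module.Free ℤ F3 := free_of_injective h3.injective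
  have : Module.Free ℤ (range γ'.toIntLinearMap) := free_of_injective (injective_subtype _)
  obtain ⟨y, k, q, h, hqε, hqγ, hkε', hkγ', hδ⟩ :=
    exists_isKerCokerSequence_blockMap (ε := ε.toIntLinearMap) (γ := γ.toIntLinearMap)
      (ε' := ε'.toIntLinearMap) (γ' := γ'.toIntLinearMap) (δ := δ.toIntLinearMap)
      h1 h3 hεγ hγ hε' hεγ' hγδ hδε
  rw [← matHom_rowFinite_of_linearMap y] at h hδ
  exact ⟨_, rowFinite_of_linearMap y, realizesSixTerm_of_isKerCokerSequence_blockMap h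
    (LinearMap.congr_fun hqε) (LinearMap.congr_fun hqγ) (LinearMap.congr_fun hkε')
    (LinearMap.congr_fun hkγ') (LinearMap.congr_fun hδ)⟩

/-- Given an exact cyclic six-term sequence
`G1 →ε G2 →γ G3 →0 F1 →ε' F2 →γ' F3 →δ G1` of abelian groups with `F1, F2, F3` free,
realized at the ends by row-finite matrices `A ∈ M_{I×I'}(ℤ)`, `B ∈ M_{J×J'}(ℤ)`
(over countable nonempty index sets) via isomorphisms `α1 : coker A ≅ G1`,
`β1 : ker A ≅ F1`, `α3 : coker B ≅ G3`, `β3 : ker B ≅ F3`, there exist a row-finite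
matrix `Y ∈ M_{J×I'}(ℤ)` and isomorphisms `α2 : coker (A 0; Y B) ≅ G2`,
`β2 : ker (A 0; Y B) ≅ F2` making `(α1, α2, α3, β1, β2, β3)` an isomorphism of cyclic
complexes from the six-term sequence of the block matrix to the given sequence. -/
theorem six_term_realization {I I' J J' : Type*}
    [Countable I] [Countable I'] [Countable J] [Countable J']
    [Nonempty I] [Nonempty I'] [Nonempty J] [Nonempty J']
    {G1 G2 G3 F1 F2 F3 : Type*}
    [AddCommGroup G1] [AddCommGroup G2] [AddCommGroup G3]
    [AddCommGroup F1] [AddCommGroup F2] [AddCommGroup F3]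
    (hF1 : Module.Free ℤ F1) (hF2 : Module.Free ℤ F2) (hF3 : Module.Free ℤ F3)
    (ε : G1 →+ G2) (γ : G2 →+ G3) (ε' : F1 →+ F2) (γ' : F2 →+ F3) (δ : F3 →+ G1)
    (hexG2 : Function.Exact ⇑ε ⇑γ)
    (hexG3 : Function.Exact ⇑γ (fun _ : G3 => (0 : F1)))
    (hexF1 : Function.Exact (fun _ : G3 => (0 : F1)) ⇑ε')
    (hexF2 : Function.Exact ⇑ε' ⇑γ')
    (hexF3 : Function.Exact ⇑γ' ⇑δ)
    (hexG1 : Function.Exact ⇑δ ⇑ε)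
    {A : I → I' → ℤ} {B : J → J' → ℤ} (hA : RowFinite A) (hB : RowFinite B)
    (α1 : ((I' →₀ ℤ) ⧸ LinearMap.range (matHom hA)) ≃+ G1)
    (β1 : ↥(LinearMap.ker (matHom hA)) ≃+ F1)
    (α3 : ((J' →₀ ℤ) ⧸ LinearMap.range (matHom hB)) ≃+ G3)
    (β3 : ↥(LinearMap.ker (matHom hB)) ≃+ F3) :
    ∃ (Y : J → I' → ℤ) (hY : RowFinite Y),
      RealizesSixTerm ε γ ε' γ' δ hA hB α1 β1 α3 β3 Y hY :=
  six_term_realization_general hexG2 ((exact_zero_iff_surjective F1 γ.toIntLinearMap).1 hexG3)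
    ((exact_zero_iff_injective G3 ε'.toIntLinearMap).1 hexF1) hexF2 hexF3 hexG1 hA hB α1 β1 α3 β3
end
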